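/- There is a constant K̃ such that ‖R⁰_{Lⁿ} G_p‖ ≤ K̃ for all L > L₁ and all integers n ≥ 1, where the norm is the B_q norm. -/

import Mathlib

open MeasureTheory Filter Topology

noncomputable section

/-- Fourier transform, convention `f̂ ω = ∫ e^{-iωx} f x dx`. -/
def FT (f : ℝ → ℂ) (ω : ℝ) : ℂ :=
  ∫ x : ℝ, Complex.exp (-(Complex.I * ω * x)) * f x

/-- Fourier transform of a real-valued function. -/
def FTr (f : ℝ → ℝ) : ℝ → ℂ := FT fun x => (f x : ℂ)

/-- The quantity whose supremum over `ω` defines the `B_q` norm. -/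
def bqFun (q : ℝ) (f : ℝ → ℂ) (ω : ℝ) : ℝ :=
  (1 + |ω| ^ q) * (‖FT f ω‖ + ‖deriv (FT f) ω‖ + ‖deriv (deriv (FT f)) ω‖)

/-- The `B_q` norm `‖f‖ = sup_ω (1+|ω|^q)(|f̂(ω)|+|f̂′(ω)|+|f̂″(ω)|)`. -/
def bqNorm (q : ℝ) (f : ℝ → ℂ) : ℝ := ⨆ ω : ℝ, bqFun q f ω

/-- The `B_q` norm of a real-valued function. -/
def bqNormR (q : ℝ) (f : ℝ → ℝ) : ℝ := bqNorm q fun x => (f x : ℂ)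

/-- Membership in the space `B_q`: `f ∈ L¹`, `f̂ ∈ C²`, finite `B_q` norm. -/
def MemBq (q : ℝ) (f : ℝ → ℂ) : Prop :=
  Integrable f ∧ ContDiff ℝ 2 (FT f) ∧ BddAbove (Set.range (bqFun q f))

/-- Membership in `B_q` for a real-valued function. -/
def MemBqR (q : ℝ) (f : ℝ → ℝ) : Prop := MemBq q fun x => (f x : ℂ)

/-- Condition (G1): there is an integer `M > 0` such that `G(·,1) ∈ C^{q+2}` with
polynomial decay of all derivatives up to order `q+2`. -/
def CondG1 (G : ℝ → ℝ → ℝ) (q : ℕ) : Prop :=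
  ∃ M : ℕ, 0 < M ∧ ContDiff ℝ (q + 2 : ℕ) (fun x => G x 1) ∧
    ∀ j ≤ q + 2, ∃ B : ℝ, ∀ x : ℝ,
      (1 + |x| + x ^ 2) * (1 + |x|) ^ (M + 1) *
        |iteratedDeriv j (fun y => G y 1) x| ≤ B

/-- Condition (G2): scaling `G(x,t) = t^{-1/d} G(t^{-1/d}x, 1)`. -/
def CondG2 (G : ℝ → ℝ → ℝ) (d : ℝ) : Prop :=
  ∀ x t : ℝ, 0 < t →
    G x t = t ^ (-(1 : ℝ) / d) * G (t ^ (-(1 : ℝ) / d) * x) 1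

/-- Condition (G3): the semigroup (convolution) property. -/
def CondG3 (G : ℝ → ℝ → ℝ) : Prop :=
  ∀ x t τ : ℝ, 0 < τ → τ < t → G x t = ∫ y : ℝ, G (x - y) (t - τ) * G y τ

/-- Conditions (G). -/
def CondsG (G : ℝ → ℝ → ℝ) (q : ℕ) (d : ℝ) : Prop :=
  CondG1 G q ∧ CondG2 G d ∧ CondG3 G

/-- Hypotheses on the coefficient `c`: positive, locally integrable on `(1,∞)`,
and `c(t) = t^p + o(t^p)` as `t → ∞`. -/
def CondC (c : ℝ → ℝ) (p : ℝ) : Prop :=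
  0 < p ∧ (∀ t : ℝ, 1 < t → 0 < c t) ∧
    LocallyIntegrableOn c (Set.Ioi 1) ∧
    (fun t => c t - t ^ p) =o[atTop] fun t => t ^ p

/-- `s(t) = ∫₁ᵗ c(τ) dτ`. -/
def sF (c : ℝ → ℝ) (t : ℝ) : ℝ := ∫ τ in (1:ℝ)..t, c τ

/-- `r(t) = s(t) − (t^{p+1}−1)/(p+1)`. -/
def rF (c : ℝ → ℝ) (p t : ℝ) : ℝ := sF c t - (t ^ (p + 1) - 1) / (p + 1)

/-- Hypothesis on `L₀`: `L₀ > 1` and `|r(L)|/L^{p+1} < 1/(4(p+1))` for `L > L₀`. -/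
def CondL0 (c : ℝ → ℝ) (p L₀ : ℝ) : Prop :=
  1 < L₀ ∧ ∀ L : ℝ, L₀ < L → |rF c p L| / L ^ (p + 1) < 1 / (4 * (p + 1))

/-- `L₁ = max {L₀, 3^{1/(p+1)}}`. -/
def Lone (p L₀ : ℝ) : ℝ := max L₀ ((3:ℝ) ^ ((1:ℝ) / (p + 1)))

/-- `s_n(t) = (s(Lⁿt) − s(Lⁿ))/L^{n(p+1)}`. -/
def sn (c : ℝ → ℝ) (p L : ℝ) (n : ℕ) (t : ℝ) : ℝ :=
  (sF c (L ^ n * t) - sF c (L ^ n)) / L ^ ((n : ℝ) * (p + 1))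

/-- `u_f(x,t) = ∫ G(x−y, s_n(t)) f(y) dy`. -/
def linSol (G : ℝ → ℝ → ℝ) (c : ℝ → ℝ) (p L : ℝ) (n : ℕ) (f : ℝ → ℝ)
    (x t : ℝ) : ℝ :=
  ∫ y : ℝ, G (x - y) (sn c p L n t) * f y

/-- The linear RG operator `(R⁰_{L,n}f)(x) = L^{2(p+1)/d} u_f(L^{(p+1)/d}x, L)`. -/
def RG0 (G : ℝ → ℝ → ℝ) (c : ℝ → ℝ) (p d L : ℝ) (n : ℕ) (f : ℝ → ℝ) :
    ℝ → ℝ := fun x =>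
  L ^ (2 * (p + 1) / d) * linSol G c p L n f (L ^ ((p + 1) / d) * x) L

/-- `R⁰_{Lⁿ} = R⁰_{L,n−1} ∘ ⋯ ∘ R⁰_{L,0}`. -/
def RG0iter (G : ℝ → ℝ → ℝ) (c : ℝ → ℝ) (p d L : ℝ) :
    ℕ → (ℝ → ℝ) → ℝ → ℝ
  | 0 => fun f => f
  | n + 1 => fun f => RG0 G c p d L n (RG0iter G c p d L n f)

/-- `G_p(x) = ∂ₓ G(x, 1/(p+1))`. -/
def Gp (G : ℝ → ℝ → ℝ) (p : ℝ) : ℝ → ℝ :=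
  fun x => deriv (fun y => G y (1 / (p + 1))) x

/-- The nonlinearity `F(u,u_x)(y,τ) = Σ_j a_j u(y,τ)^j ∂ₓu(y,τ)`. -/
def Fnl (a : ℕ → ℝ) (u : ℝ → ℝ → ℝ) (y τ : ℝ) : ℝ :=
  ∑' j : ℕ, a j * u y τ ^ j * deriv (fun z => u z τ) y

/-- The coefficients define a series analytic at the origin with positive
radius of convergence. -/
def AnalyticCoeffs (a : ℕ → ℝ) : Prop :=
  ∃ ρ : ℝ, 0 < ρ ∧ ∀ z : ℝ, |z| < ρ → Summable fun j : ℕ => |a j| * |z| ^ j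

/-- `u` solves the nonlinear integral equation for all `t > 1`. -/
def SolvesNL (G : ℝ → ℝ → ℝ) (c : ℝ → ℝ) (lam : ℝ) (a : ℕ → ℝ)
    (f : ℝ → ℝ) (u : ℝ → ℝ → ℝ) : Prop :=
  ∀ x : ℝ, ∀ t : ℝ, 1 < t → u x t =
    (∫ y : ℝ, G (x - y) (sF c t) * f y) +
      lam * ∫ τ in (1:ℝ)..t, ∫ y : ℝ,
        G (x - y) (sF c t - sF c τ) * Fnl a u y τ

/-- The norm `‖u‖_L = sup_{t∈[1,L]} ‖u(·,t)‖` on `B^{(L)}`. -/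
def normL (q L : ℝ) (u : ℝ → ℝ → ℝ) : ℝ :=
  ⨆ t : Set.Icc (1:ℝ) L, bqNormR q fun x => u x (t : ℝ)

/-- `d_F = (2α+3)(p+1) − 2(p+1) − d`. -/
def dF (p d : ℝ) (α : ℕ) : ℝ := (2 * (α : ℝ) + 3) * (p + 1) - 2 * (p + 1) - d

/-- The generalized coupling constant `λ_n = L^{-(n/d)[(2α+3)(p+1)−2(p+1)−d]} λ`. -/
def lamn (lam p d L : ℝ) (α n : ℕ) : ℝ :=
  L ^ (-((n : ℝ) / d) * dF p d α) * lam

/-- The renormalized nonlinearity `F_{L,n}`. -/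
def FnlRen (a : ℕ → ℝ) (p d L : ℝ) (α n : ℕ) (u : ℝ → ℝ → ℝ)
    (y τ : ℝ) : ℝ :=
  ∑' j : ℕ, a j * L ^ (2 * (n : ℝ) / d * (p + 1) * ((α : ℝ) - (j : ℝ))) *
    u y τ ^ j * deriv (fun z => u z τ) y

/-- The rescaled solution `u_n(x,t) = L^{2n(p+1)/d} u(L^{n(p+1)/d}x, Lⁿt)`. -/
def resc (u : ℝ → ℝ → ℝ) (p d L : ℝ) (n : ℕ) (x t : ℝ) : ℝ :=
  L ^ (2 * (n : ℝ) * (p + 1) / d) *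
    u (L ^ ((n : ℝ) * (p + 1) / d) * x) (L ^ n * t)

/-- `u` solves the `n`-th renormalized integral equation on `[1,L]` with data `f`. -/
def SolvesRen (G : ℝ → ℝ → ℝ) (c : ℝ → ℝ) (lam p d L : ℝ) (a : ℕ → ℝ)
    (α n : ℕ) (f : ℝ → ℝ) (u : ℝ → ℝ → ℝ) : Prop :=
  ∀ x : ℝ, ∀ t ∈ Set.Icc (1:ℝ) L, u x t =
    (∫ y : ℝ, G (x - y) (sn c p L n t) * f y) +
      lamn lam p d L α n * ∫ τ in (1:ℝ)..t, ∫ y : ℝ,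
        G (x - y) (sn c p L n t - sn c p L n τ) * FnlRen a p d L α n u y τ

end

/-!
By (G3), convolving `∂ₓG(·, t)` with `G(·, s)` gives `∂ₓG(·, s + t)`, and by (G2) the rescaling in
the RG operator turns this into `∂ₓG` at time `(s + t) / L^(p+1)`. Iterating from `t = 1/(p+1)`, the
increments `s_n(L)` telescope and `R⁰_{Lⁿ} G_p = ∂ₓG(·, T)` with
`T = (1/(p+1) + s(Lⁿ)) / L^(n(p+1)) = 1/(p+1) + r(Lⁿ) / L^(n(p+1))`. By the choice of `L₀` this time
stays in the compact interval `[3/(4(p+1)), 5/(4(p+1))]` of positive reals. On it the functions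
`∂ₓG(·, T)` are dilates, by factors in a compact set, of `∂ₓG(·, 1)`, which (G1) places in `B_q`,
and so they are bounded in `B_q`.
-/

section Fourier

open scoped FourierTransform

variable {q : ℝ} {f : ℝ → ℂ}

lemma FT_eq_fourier (f : ℝ → ℂ) : FT f = fun ω => 𝓕 f ((2 * Real.pi)⁻¹ * ω) := by
  funext ω
  rw [Real.fourier_real_eq_integral_exp_smul, FT]
  congr! 3 with x
  push_cast
  field_simp

lemma FT_const_mul_comp_mul_left (f : ℝ → ℂ) (c : ℂ) {σ : ℝ} (hσ : 0 < σ) :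
    FT (fun x => c * f (σ * x)) = fun ω => c * σ⁻¹ * FT f (σ⁻¹ * ω) := by
  funext ω
  have hσ' : (σ : ℂ) ≠ 0 := mod_cast hσ.ne'
  calc ∫ x : ℝ, Complex.exp (-(Complex.I * ω * x)) * (c * f (σ * x))
      = ∫ x : ℝ, c * (Complex.exp (-(Complex.I * (σ⁻¹ * ω : ℝ) * (σ * x : ℝ))) * f (σ * x)) := by
        congr! 2 with x
        rw [mul_left_comm]
        congr! 4
        push_cast
        field_simp
    _ = c * σ⁻¹ * FT f (σ⁻¹ * ω) := by
        rw [integral_const_mul, mul_assoc, FT, Measure.integral_comp_mul_left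
          (fun x => Complex.exp (-(Complex.I * (σ⁻¹ * ω : ℝ) * x)) * f x) σ,
          abs_of_pos (inv_pos.2 hσ), Complex.real_smul, Complex.ofReal_inv]

lemma exists_pow_mul_norm_iteratedDeriv_FT_le {K N : ℕ} (hf : ContDiff ℝ N f)
    (hint : ∀ k ≤ K, ∀ j ≤ N, Integrable fun x => |x| ^ k * ‖iteratedDeriv j f x‖) :
    ∀ k ≤ K, ∀ n ≤ N, ∃ C, ∀ ω, |ω| ^ n * ‖iteratedDeriv k (FT f) ω‖ ≤ C := by
  intro k hk n hn
  have hint' : ∀ k j : ℕ, (k : ℕ∞) ≤ K → (j : ℕ∞) ≤ N →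
      Integrable fun x => ‖x‖ ^ k * ‖iteratedFDeriv ℝ j f x‖ := fun k j hk hj => by
    simpa only [norm_iteratedFDeriv_eq_norm_iteratedDeriv, Real.norm_eq_abs]
      using hint k (mod_cast hk) j (mod_cast hj)
  have hsmooth : ContDiff ℝ k (𝓕 f) := by
    refine Real.contDiff_fourier (N := k) fun m hm => ?_
    simpa using hint m ((Nat.cast_le.1 hm).trans hk) 0 N.zero_le
  obtain ⟨B, hB⟩ : ∃ B, ∀ v, |v| ^ n * ‖iteratedDeriv k (𝓕 f) v‖ ≤ B := by
    simp only [← norm_iteratedFDeriv_eq_norm_iteratedDeriv, ← Real.norm_eq_abs]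
    exact ⟨_, Real.pow_mul_norm_iteratedFDeriv_fourier_le (K := K) (N := N) hf hint'
      (Nat.cast_le.2 hk) (Nat.cast_le.2 hn)⟩
  refine ⟨(2 * Real.pi) ^ n * ((2 * Real.pi)⁻¹ ^ k * B), fun ω => ?_⟩
  have hω : |ω| = 2 * Real.pi * |(2 * Real.pi)⁻¹ * ω| := by
    rw [abs_mul, abs_of_pos (inv_pos.2 Real.two_pi_pos), mul_inv_cancel_left₀ Real.two_pi_pos.ne']
  rw [FT_eq_fourier, iteratedDeriv_comp_const_smul hsmooth, norm_smul, norm_pow,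
    Real.norm_of_nonneg (by positivity), hω, mul_pow, mul_assoc,
    mul_left_comm (|(2 * Real.pi)⁻¹ * ω| ^ n)]
  gcongr
  exact hB _

lemma bqFun_eq_sum (q : ℝ) (f : ℝ → ℂ) (ω : ℝ) :
    bqFun q f ω = (1 + |ω| ^ q) * ∑ k ∈ Finset.range 3, ‖iteratedDeriv k (FT f) ω‖ := by
  simp [bqFun, Finset.sum_range_succ, iteratedDeriv_succ]

lemma memBq_of_integrable_pow_mul_iteratedDeriv {N : ℕ} (hf : ContDiff ℝ N f)
    (hint : ∀ k ≤ 2, ∀ j ≤ N, Integrable fun x => |x| ^ k * ‖iteratedDeriv j f x‖) :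
    MemBq N f := by
  refine ⟨?_, ?_, ?_⟩
  · refine (integrable_norm_iff hf.continuous.aestronglyMeasurable).1 ?_
    simpa using hint 0 (by norm_num) 0 N.zero_le
  · rw [FT_eq_fourier]
    refine (Real.contDiff_fourier (N := 2) fun n hn => ?_).comp (contDiff_const.mul contDiff_id)
    simpa using hint n (mod_cast hn) 0 N.zero_le
  · have hbound : ∀ k ∈ Finset.range 3, ∃ C, ∀ ω,
        (1 + |ω| ^ N) * ‖iteratedDeriv k (FT f) ω‖ ≤ C := fun k hk => by
      have hk : k ≤ 2 := Finset.mem_range_succ_iff.1 hk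
      obtain ⟨C₀, hC₀⟩ := exists_pow_mul_norm_iteratedDeriv_FT_le hf hint k hk 0 N.zero_le
      obtain ⟨C₁, hC₁⟩ := exists_pow_mul_norm_iteratedDeriv_FT_le hf hint k hk N le_rfl
      refine ⟨C₀ + C₁, fun ω => ?_⟩
      rw [add_mul, ← pow_zero |ω|]
      exact add_le_add (hC₀ ω) (hC₁ ω)
    choose! C hC using hbound
    refine ⟨∑ k ∈ Finset.range 3, C k, ?_⟩
    rintro _ ⟨ω, rfl⟩
    rw [bqFun_eq_sum, Finset.mul_sum, Real.rpow_natCast]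
    exact Finset.sum_le_sum fun k hk => hC k hk ω

lemma memBqR_of_integrable_pow_mul_iteratedDeriv {f : ℝ → ℝ} {N : ℕ} (hf : ContDiff ℝ N f)
    (hint : ∀ k ≤ 2, ∀ j ≤ N, Integrable fun x => |x| ^ k * |iteratedDeriv j f x|) :
    MemBqR N f := by
  refine memBq_of_integrable_pow_mul_iteratedDeriv (Complex.ofRealCLM.contDiff.comp hf)
    fun k hk j hj => ?_
  have hnorm (x : ℝ) : ‖iteratedDeriv j (fun y => (f y : ℂ)) x‖ = |iteratedDeriv j f x| := by
    rw [← norm_iteratedFDeriv_eq_norm_iteratedDeriv, ← Real.norm_eq_abs,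
      ← norm_iteratedFDeriv_eq_norm_iteratedDeriv]
    exact Complex.ofRealLI.norm_iteratedFDeriv_comp_left hf.contDiffAt (mod_cast hj)
  simpa only [hnorm] using hint k hk j hj

lemma bqFun_const_mul_comp_mul_left_le (hf : ContDiff ℝ 2 (FT f)) (c : ℂ) {σ : ℝ}
    (hσ : 0 < σ) (ω : ℝ) :
    bqFun q (fun x => c * f (σ * x)) ω ≤
      ‖c‖ * (1 + σ ^ q) * (∑ k ∈ Finset.range 3, σ⁻¹ ^ (k + 1)) * bqFun q f (σ⁻¹ * ω) := by
  set v := σ⁻¹ * ω with hv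
  have hω : |ω| = σ * |v| := by
    rw [hv, abs_mul, abs_of_pos (inv_pos.2 hσ), mul_inv_cancel_left₀ hσ.ne']
  have hweight : 1 + |ω| ^ q ≤ (1 + σ ^ q) * (1 + |v| ^ q) := by
    rw [hω, Real.mul_rpow hσ.le (abs_nonneg v)]
    nlinarith [Real.rpow_nonneg hσ.le q, Real.rpow_nonneg (abs_nonneg v) q]
  have hderiv : ∀ k ∈ Finset.range 3, ‖iteratedDeriv k (FT fun x => c * f (σ * x)) ω‖ =
      ‖c‖ * (σ⁻¹ ^ (k + 1) * ‖iteratedDeriv k (FT f) v‖) := fun k hk => by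
    have hfk : ContDiff ℝ k (FT f) :=
      hf.of_le (mod_cast Finset.mem_range_succ_iff.1 hk)
    rw [FT_const_mul_comp_mul_left f c hσ, iteratedDeriv_const_mul_field,
      iteratedDeriv_comp_const_smul hfk]
    simp only [norm_mul, norm_smul, norm_pow, Complex.norm_real,
      Real.norm_of_nonneg (inv_pos.2 hσ).le]
    ring
  rw [bqFun_eq_sum, bqFun_eq_sum, Finset.sum_congr rfl hderiv, ← Finset.mul_sum]
  calc (1 + |ω| ^ q) *
        (‖c‖ * ∑ k ∈ Finset.range 3, σ⁻¹ ^ (k + 1) * ‖iteratedDeriv k (FT f) v‖)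
      ≤ (1 + σ ^ q) * (1 + |v| ^ q) * (‖c‖ * ((∑ k ∈ Finset.range 3, σ⁻¹ ^ (k + 1)) *
          ∑ k ∈ Finset.range 3, ‖iteratedDeriv k (FT f) v‖)) := by
        gcongr
        rw [Finset.sum_mul]
        gcongr with k hk
        exact Finset.single_le_sum (f := fun k => ‖iteratedDeriv k (FT f) v‖)
          (fun _ _ => norm_nonneg _) hk
    _ = _ := by ring

lemma MemBq.const_mul_comp_mul_left (hf : MemBq q f) (c : ℂ) {σ : ℝ} (hσ : 0 < σ) :
    MemBq q fun x => c * f (σ * x) := by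
  obtain ⟨hint, hsmooth, B, hB⟩ := hf
  refine ⟨(hint.comp_mul_left' hσ.ne').const_mul c, ?_,
    ‖c‖ * (1 + σ ^ q) * (∑ k ∈ Finset.range 3, σ⁻¹ ^ (k + 1)) * B, ?_⟩
  · rw [FT_const_mul_comp_mul_left f c hσ]
    exact contDiff_const.mul (hsmooth.comp (contDiff_const.mul contDiff_id))
  · rintro _ ⟨ω, rfl⟩
    refine (bqFun_const_mul_comp_mul_left_le hsmooth c hσ ω).trans ?_
    gcongr
    exact hB ⟨_, rfl⟩

lemma MemBq.exists_bqNorm_const_mul_comp_mul_left_le (hf : MemBq q f) {c : ℝ → ℂ} {σ₀ σ₁ : ℝ}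
    (hσ₀ : 0 < σ₀) (hc : ContinuousOn c (Set.Icc σ₀ σ₁)) :
    ∃ K, ∀ σ ∈ Set.Icc σ₀ σ₁, bqNorm q (fun x => c σ * f (σ * x)) ≤ K := by
  obtain ⟨-, hsmooth, hbdd⟩ := hf
  have hpos {σ : ℝ} (hσ : σ ∈ Set.Icc σ₀ σ₁) : 0 < σ := hσ₀.trans_le hσ.1
  have hcont : ContinuousOn (fun σ => ‖c σ‖ * (1 + σ ^ q) *
      (∑ k ∈ Finset.range 3, σ⁻¹ ^ (k + 1)) * bqNorm q f) (Set.Icc σ₀ σ₁) := by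
    have hinv : ContinuousOn (fun σ : ℝ => σ⁻¹) (Set.Icc σ₀ σ₁) :=
      continuousOn_inv₀.mono fun _ hσ => (hpos hσ).ne'
    refine ((hc.norm.mul (continuousOn_const.add ?_)).mul ?_).mul continuousOn_const
    · exact continuousOn_id.rpow_const fun _ hσ => .inl (hpos hσ).ne'
    · exact continuousOn_finsetSum _ fun k _ => hinv.pow (k + 1)
  obtain ⟨K, hK⟩ := isCompact_Icc.bddAbove_image hcont
  refine ⟨K, fun σ hσ => le_trans (ciSup_le fun ω => ?_) (hK ⟨σ, hσ, rfl⟩)⟩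
  refine (bqFun_const_mul_comp_mul_left_le hsmooth (c σ) (hpos hσ) ω).trans ?_
  have hσ' := hpos hσ
  exact mul_le_mul_of_nonneg_left (le_ciSup hbdd _) (by positivity)

end Fourier

section Convolution

open scoped Convolution

lemma hasDerivAt_convolution_right_of_bounded {𝕜 E E' F : Type*} [RCLike 𝕜]
    [NormedAddCommGroup E] [NormedSpace 𝕜 E] [NormedAddCommGroup E'] [NormedSpace 𝕜 E']
    [CompleteSpace E']
    [NormedAddCommGroup F] [NormedSpace ℝ F] [NormedSpace 𝕜 F] (L : E →L[𝕜] E' →L[𝕜] F)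
    {μ : Measure 𝕜} {f : 𝕜 → E} {g : 𝕜 → E'} {C C' : ℝ} (hf : Integrable f μ)
    (hg : Differentiable 𝕜 g) (hgC : ∀ x, ‖g x‖ ≤ C) (hgC' : ∀ x, ‖deriv g x‖ ≤ C') (x : 𝕜) :
    HasDerivAt (f ⋆[L, μ] g) ((f ⋆[L, μ] deriv g) x) x := by
  have hmeas {h : 𝕜 → E'} (hh : StronglyMeasurable h) (z : 𝕜) :
      AEStronglyMeasurable (fun y => L (f y) (h (z - y))) μ :=
    L.aestronglyMeasurable_comp₂ hf.aestronglyMeasurable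
      (hh.comp_measurable (measurable_id.const_sub z)).aestronglyMeasurable
  refine (hasDerivAt_integral_of_dominated_loc_of_deriv_le (s := Set.univ)
    (bound := fun y => ‖L‖ * ‖f y‖ * C') (F' := fun z y => L (f y) (deriv g (z - y)))
    univ_mem (Eventually.of_forall (hmeas hg.continuous.stronglyMeasurable))
    ?_ (hmeas (stronglyMeasurable_deriv g) x) ?_ ?_ ?_).2
  · refine ((hf.norm.const_mul ‖L‖).mul_const C).mono'
      (hmeas hg.continuous.stronglyMeasurable x) (Eventually.of_forall fun y => ?_)
    exact L.le_of_opNorm₂_le_of_le le_rfl le_rfl (hgC _)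
  · exact Eventually.of_forall fun y z _ => L.le_of_opNorm₂_le_of_le le_rfl le_rfl (hgC' _)
  · exact (hf.norm.const_mul ‖L‖).mul_const C'
  · exact Eventually.of_forall fun y z _ =>
      (L (f y)).hasFDerivAt.comp_hasDerivAt z ((hg (z - y)).hasDerivAt.comp_sub_const z y)

end Convolution

section Kernel

open scoped Convolution

variable {G : ℝ → ℝ → ℝ} {q : ℕ} {d : ℝ}

/-- The spatial derivative `∂ₓG(·, t)` of the kernel; `G_p` is its value at `t = 1/(p+1)`. -/
noncomputable def gradKernel (G : ℝ → ℝ → ℝ) (t : ℝ) : ℝ → ℝ :=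
  deriv fun x => G x t

lemma CondG2.eq_rescale (hG : CondG2 G d) {a t : ℝ} (ha : 0 < a) (ht : 0 < t) (x : ℝ) :
    G x t = a ^ (1 / d) * G (a ^ (1 / d) * x) (a * t) := by
  have hcancel : (a * t) ^ (-1 / d) * a ^ (1 / d) = t ^ (-1 / d) := by
    rw [Real.mul_rpow ha.le ht.le, mul_right_comm, ← Real.rpow_add ha, neg_div, neg_add_cancel,
      Real.rpow_zero, one_mul]
  rw [hG x t ht, hG _ (a * t) (mul_pos ha ht), ← hcancel]
  ring_nf

lemma CondG2.gradKernel_eq_rescale (hG : CondG2 G d) {a t : ℝ} (ha : 0 < a) (ht : 0 < t)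
    (x : ℝ) :
    gradKernel G t x = (a ^ (1 / d)) ^ 2 * gradKernel G (a * t) (a ^ (1 / d) * x) := by
  rw [gradKernel, funext (hG.eq_rescale ha ht), deriv_const_mul_field,
    deriv_comp_mul_left (a ^ (1 / d)) (fun y => G y (a * t)), smul_eq_mul, ← mul_assoc, ← sq,
    gradKernel]

lemma CondG2.eq_profile (hG : CondG2 G d) {t : ℝ} (ht : 0 < t) (x : ℝ) :
    G x t = t⁻¹ ^ (1 / d) * G (t⁻¹ ^ (1 / d) * x) 1 := by
  rw [hG.eq_rescale (inv_pos.2 ht) ht, inv_mul_cancel₀ ht.ne']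

lemma CondG2.gradKernel_eq_profile (hG : CondG2 G d) {t : ℝ} (ht : 0 < t) (x : ℝ) :
    gradKernel G t x = (t⁻¹ ^ (1 / d)) ^ 2 * gradKernel G 1 (t⁻¹ ^ (1 / d) * x) := by
  rw [hG.gradKernel_eq_rescale (inv_pos.2 ht) ht, inv_mul_cancel₀ ht.ne']

lemma CondG1.contDiff (hG : CondG1 G q) : ContDiff ℝ (q + 2 : ℕ) fun x => G x 1 :=
  let ⟨_, _, hsmooth, _⟩ := hG
  hsmooth

lemma CondG1.exists_pow_mul_abs_iteratedDeriv_le (hG : CondG1 G q) {j k : ℕ} (hj : j ≤ q + 2)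
    (hk : k ≤ 2) :
    ∃ B, ∀ x, |x| ^ k * |iteratedDeriv j (fun y => G y 1) x| ≤ B * (1 + x ^ 2)⁻¹ := by
  obtain ⟨M, hM, -, hdecay⟩ := hG
  obtain ⟨B, hB⟩ := hdecay j hj
  refine ⟨B, fun x => ?_⟩
  have hpow : |x| ^ k ≤ 1 + |x| + x ^ 2 := by
    rw [← sq_abs x]
    interval_cases k <;> nlinarith [abs_nonneg x]
  have hweight : 1 + x ^ 2 ≤ (1 + |x|) ^ (M + 1) :=
    calc 1 + x ^ 2 ≤ (1 + |x|) ^ 2 := by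
          rw [← sq_abs x]
          nlinarith [abs_nonneg x]
      _ ≤ (1 + |x|) ^ (M + 1) := pow_le_pow_right₀ (by simp) (by lia)
  rw [← div_eq_mul_inv, le_div_iff₀ (by positivity), mul_right_comm]
  refine le_trans ?_ (hB x)
  gcongr

lemma CondG1.integrable_pow_mul_abs_iteratedDeriv (hG : CondG1 G q) {j k : ℕ}
    (hj : j ≤ q + 2) (hk : k ≤ 2) :
    Integrable fun x => |x| ^ k * |iteratedDeriv j (fun y => G y 1) x| := by
  obtain ⟨B, hB⟩ := hG.exists_pow_mul_abs_iteratedDeriv_le hj hk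
  have hcont : Continuous (iteratedDeriv j fun y => G y 1) :=
    hG.contDiff.continuous_iteratedDeriv j (mod_cast hj)
  refine (integrable_inv_one_add_sq.const_mul B).mono'
    ((continuous_abs.pow k).mul hcont.abs).aestronglyMeasurable (Eventually.of_forall fun x => ?_)
  rw [Real.norm_of_nonneg (by positivity)]
  exact hB x

lemma CondG1.exists_abs_iteratedDeriv_le (hG : CondG1 G q) {j : ℕ} (hj : j ≤ q + 2) :
    ∃ B, ∀ x, |iteratedDeriv j (fun y => G y 1) x| ≤ B := by
  obtain ⟨B, hB⟩ := hG.exists_pow_mul_abs_iteratedDeriv_le hj (k := 0) (by norm_num)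
  simp only [pow_zero, one_mul] at hB
  have hB₀ : 0 ≤ B := by simpa using (abs_nonneg _).trans (hB 0)
  exact ⟨B, fun x => (hB x).trans
    (mul_le_of_le_one_right hB₀ (inv_le_one_of_one_le₀ (by nlinarith [sq_nonneg x])))⟩

lemma CondG1.memBqR_gradKernel_one (hG : CondG1 G q) : MemBqR q (gradKernel G 1) := by
  have hsmooth : ContDiff ℝ ((q + 1 : ℕ) + 1) fun x => G x 1 := mod_cast hG.contDiff
  refine memBqR_of_integrable_pow_mul_iteratedDeriv
    ((contDiff_succ_iff_deriv.1 hsmooth).2.2.of_le (mod_cast q.le_succ)) fun k hk j hj => ?_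
  simpa only [iteratedDeriv_succ', gradKernel] using
    hG.integrable_pow_mul_abs_iteratedDeriv (j := j + 1) (by lia) hk

lemma ofReal_gradKernel_eq_profile (hG : CondG2 G d) {t : ℝ} (ht : 0 < t) :
    (fun x => (gradKernel G t x : ℂ)) = fun x =>
      ((t⁻¹ ^ (1 / d) : ℝ) : ℂ) ^ 2 * gradKernel G 1 (t⁻¹ ^ (1 / d) * x) := by
  funext x
  rw [hG.gradKernel_eq_profile ht]
  push_cast
  rfl

lemma memBqR_gradKernel (h₁ : CondG1 G q) (h₂ : CondG2 G d) {t : ℝ} (ht : 0 < t) :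
    MemBqR q (gradKernel G t) := by
  rw [MemBqR, ofReal_gradKernel_eq_profile h₂ ht]
  exact h₁.memBqR_gradKernel_one.const_mul_comp_mul_left _ (by positivity)

lemma exists_bqNormR_gradKernel_le (h₁ : CondG1 G q) (h₂ : CondG2 G d) (hd : 0 < d) {a b : ℝ}
    (ha : 0 < a) : ∃ K, ∀ t ∈ Set.Icc a b, bqNormR q (gradKernel G t) ≤ K := by
  rcases lt_or_ge b a with hba | hab
  · simp [Set.Icc_eq_empty_of_lt hba]
  have hb : 0 < b := ha.trans_le hab
  obtain ⟨K, hK⟩ := h₁.memBqR_gradKernel_one.exists_bqNorm_const_mul_comp_mul_left_le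
    (c := fun σ => (σ : ℂ) ^ 2) (σ₀ := b⁻¹ ^ (1 / d)) (σ₁ := a⁻¹ ^ (1 / d)) (by positivity)
    (by fun_prop)
  refine ⟨K, fun t ⟨hat, htb⟩ => ?_⟩
  have ht : 0 < t := ha.trans_le hat
  rw [bqNormR, ofReal_gradKernel_eq_profile h₂ ht]
  exact hK _ ⟨by gcongr, by gcongr⟩

lemma integrable_kernel (h₁ : CondG1 G q) (h₂ : CondG2 G d) {t : ℝ} (ht : 0 < t) :
    Integrable fun x => G x t := by
  have hint : Integrable fun x => G x 1 := by
    refine (integrable_norm_iff h₁.contDiff.continuous.aestronglyMeasurable).1 ?_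
    simpa using h₁.integrable_pow_mul_abs_iteratedDeriv (j := 0) (k := 0) (by lia) (by lia)
  rw [funext (h₂.eq_profile ht)]
  exact (hint.comp_mul_left' (by positivity)).const_mul _

lemma differentiable_kernel (h₁ : CondG1 G q) (h₂ : CondG2 G d) {t : ℝ} (ht : 0 < t) :
    Differentiable ℝ fun x => G x t := by
  have hdiff : Differentiable ℝ fun x => G x 1 := h₁.contDiff.differentiable (by simp)
  rw [funext (h₂.eq_profile ht)]
  exact (hdiff.comp (differentiable_id.const_mul _)).const_mul _

lemma exists_norm_kernel_le (h₁ : CondG1 G q) (h₂ : CondG2 G d) {t : ℝ} (ht : 0 < t) :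
    ∃ B, ∀ x, ‖G x t‖ ≤ B := by
  obtain ⟨B, hB⟩ := h₁.exists_abs_iteratedDeriv_le (j := 0) (by lia)
  refine ⟨‖t⁻¹ ^ (1 / d)‖ * B, fun x => ?_⟩
  rw [h₂.eq_profile ht, norm_mul]
  gcongr
  exact hB _

lemma exists_norm_gradKernel_le (h₁ : CondG1 G q) (h₂ : CondG2 G d) {t : ℝ} (ht : 0 < t) :
    ∃ B, ∀ x, ‖gradKernel G t x‖ ≤ B := by
  obtain ⟨B, hB⟩ := h₁.exists_abs_iteratedDeriv_le (j := 1) (by lia)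
  simp only [iteratedDeriv_one] at hB
  refine ⟨‖(t⁻¹ ^ (1 / d)) ^ 2‖ * B, fun x => ?_⟩
  rw [h₂.gradKernel_eq_profile ht, norm_mul]
  gcongr
  exact hB _

lemma CondsG.integral_mul_gradKernel (hG : CondsG G q d) {s t : ℝ} (hs : 0 < s) (ht : 0 < t)
    (x : ℝ) : ∫ y, G (x - y) s * gradKernel G t y = gradKernel G (s + t) x := by
  obtain ⟨h₁, h₂, h₃⟩ := hG
  obtain ⟨B, hB⟩ := exists_norm_kernel_le h₁ h₂ ht
  obtain ⟨B', hB'⟩ := exists_norm_gradKernel_le h₁ h₂ ht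
  have hsemigroup : (fun x => G x (s + t)) =
      (fun x => G x s) ⋆[ContinuousLinearMap.mul ℝ ℝ, volume] fun x => G x t := by
    funext z
    rw [convolution_mul_swap, h₃ z (s + t) t ht (by linarith), add_sub_cancel_right]
  have hderiv := hasDerivAt_convolution_right_of_bounded (ContinuousLinearMap.mul ℝ ℝ)
    (integrable_kernel h₁ h₂ hs) (differentiable_kernel h₁ h₂ ht) hB hB' x
  rw [← hsemigroup] at hderiv
  exact (hderiv.deriv.trans convolution_mul_swap).symm

end Kernel

section RenormalizationGroup

variable {G : ℝ → ℝ → ℝ} {q : ℕ} {c : ℝ → ℝ} {p d L₀ L t : ℝ}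

lemma CondL0.intervalIntegrable (hL₀ : CondL0 c p L₀) (hp : -1 < p) (ht : 1 ≤ t) :
    IntervalIntegrable c volume 1 t := by
  -- Otherwise `s` would vanish on `[t, ∞)`, the junk value of a divergent integral, and then
  -- `|r(x)| / x^(p+1)` would tend to `1/(p+1)`.
  by_contra hdiv
  have hp1 : 0 < p + 1 := by linarith
  obtain ⟨x, hx2, hxL₀, htx⟩ := (((tendsto_rpow_atTop hp1).eventually_gt_atTop 2).and
    ((eventually_gt_atTop L₀).and (eventually_gt_atTop t))).exists
  have hs : sF c x = 0 := intervalIntegral.integral_undef fun h =>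
    hdiv (h.mono_set (Set.uIcc_subset_uIcc_left (Set.mem_uIcc_of_le ht htx.le)))
  have hr := hL₀.2 x hxL₀
  rw [rF, hs, zero_sub, abs_neg, abs_of_nonneg (div_nonneg (by linarith) hp1.le), div_div,
    div_lt_div_iff₀ (by positivity) (by positivity)] at hr
  nlinarith

lemma CondL0.sn_pos (hL₀ : CondL0 c p L₀) (hp : -1 < p) (hc : ∀ t, 1 < t → 0 < c t)
    (hL : 1 < L) (n : ℕ) : 0 < sn c p L n L := by
  have hLn : 1 ≤ L ^ n := one_le_pow₀ hL.le
  have hlt : L ^ n < L ^ n * L := lt_mul_of_one_lt_right (by positivity) hL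
  have hint := hL₀.intervalIntegrable hp hLn
  have hint' := hL₀.intervalIntegrable hp (hLn.trans hlt.le)
  rw [sn, sF, sF, intervalIntegral.integral_interval_sub_left hint' hint]
  refine div_pos ?_ (by positivity)
  exact intervalIntegral.intervalIntegral_pos_of_pos_on (hint.symm.trans hint')
    (fun x hx => hc x (hLn.trans_lt hx.1)) hlt

/-- The time `(1/(p+1) + s(t)) / t^(p+1)` such that evolving `G_p` up to time `t` and rescaling
space by `t^((p+1)/d)` turns it into `∂ₓG` at that time; it tends to `1/(p+1)` as `t → ∞`. -/
noncomputable def effectiveTime (c : ℝ → ℝ) (p t : ℝ) : ℝ :=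
  (1 / (p + 1) + sF c t) / t ^ (p + 1)

lemma effectiveTime_one (c : ℝ → ℝ) (p : ℝ) : effectiveTime c p 1 = 1 / (p + 1) := by
  simp [effectiveTime, sF]

lemma effectiveTime_eq_add_rF (c : ℝ → ℝ) (hp : p + 1 ≠ 0) (ht : 0 < t) :
    effectiveTime c p t = 1 / (p + 1) + rF c p t / t ^ (p + 1) := by
  have ht' : t ^ (p + 1) ≠ 0 := (Real.rpow_pos_of_pos ht _).ne'
  rw [effectiveTime, rF]
  field_simp
  ring

lemma CondL0.effectiveTime_mem_Icc (hL₀ : CondL0 c p L₀) (hp : -1 < p) (ht : L₀ < t) :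
    effectiveTime c p t ∈ Set.Icc (3 / (4 * (p + 1))) (5 / (4 * (p + 1))) := by
  have ht0 : 0 < t := by linarith [hL₀.1]
  have hp1 : 0 < p + 1 := by linarith
  have hr := hL₀.2 t ht
  rw [← abs_of_pos (Real.rpow_pos_of_pos ht0 (p + 1)), ← abs_div, abs_lt] at hr
  have h₃ : 3 / (4 * (p + 1)) = 1 / (p + 1) - 1 / (4 * (p + 1)) := by field_simp; norm_num
  have h₅ : 5 / (4 * (p + 1)) = 1 / (p + 1) + 1 / (4 * (p + 1)) := by field_simp; norm_num
  rw [effectiveTime_eq_add_rF c hp1.ne' ht0, h₃, h₅]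
  constructor <;> linarith [hr.1, hr.2]

lemma CondL0.effectiveTime_pow_mem_Icc (hL₀ : CondL0 c p L₀) (hp : -1 < p) (hL : L₀ < L)
    (n : ℕ) :
    effectiveTime c p (L ^ n) ∈ Set.Icc (3 / (4 * (p + 1))) (5 / (4 * (p + 1))) := by
  rcases Nat.eq_zero_or_pos n with rfl | hn
  · have hp1 : 0 < p + 1 := by linarith
    rw [pow_zero, effectiveTime_one, Set.mem_Icc, div_le_div_iff₀ (by positivity) hp1,
      div_le_div_iff₀ hp1 (by positivity)]
    constructor <;> linarith
  · exact hL₀.effectiveTime_mem_Icc hp (hL.trans_le (le_self_pow₀ (hL₀.1.trans hL).le hn.ne'))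

lemma sn_add_effectiveTime (c : ℝ → ℝ) (p : ℝ) (hL : 0 < L) (n : ℕ) :
    sn c p L n L + effectiveTime c p (L ^ n) =
      L ^ (p + 1) * effectiveTime c p (L ^ (n + 1)) := by
  have hpow : L ^ ((n : ℝ) * (p + 1)) = (L ^ n) ^ (p + 1) := by
    rw [Real.rpow_mul hL.le, Real.rpow_natCast]
  have hsucc : (L ^ (n + 1)) ^ (p + 1) = (L ^ n) ^ (p + 1) * L ^ (p + 1) := by
    rw [pow_succ, Real.mul_rpow (by positivity) hL.le]
  have hne : L ^ (p + 1) ≠ 0 := by positivity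
  rw [sn, effectiveTime, effectiveTime, hpow, hsucc, ← pow_succ, ← add_div]
  field_simp
  ring

lemma CondsG.RG0_gradKernel (hG : CondsG G q d) (hL : 0 < L) {n : ℕ} {T : ℝ} (hT : 0 < T)
    (ht : 0 < t) (hs : 0 < sn c p L n L) (h : sn c p L n L + t = L ^ (p + 1) * T) :
    RG0 G c p d L n (gradKernel G t) = gradKernel G T := by
  have hsq : L ^ (2 * (p + 1) / d) = ((L ^ (p + 1)) ^ (1 / d)) ^ 2 := by
    rw [← Real.rpow_natCast, ← Real.rpow_mul (by positivity), ← Real.rpow_mul hL.le]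
    push_cast
    ring_nf
  have hscale : L ^ ((p + 1) / d) = (L ^ (p + 1)) ^ (1 / d) := by
    rw [← Real.rpow_mul hL.le, mul_one_div]
  funext x
  rw [RG0, linSol, hG.integral_mul_gradKernel hs ht, h, hsq, hscale]
  exact (hG.2.1.gradKernel_eq_rescale (by positivity) hT x).symm

lemma CondsG.RG0iter_Gp (hG : CondsG G q d) (hp : -1 < p) (hc : ∀ t, 1 < t → 0 < c t)
    (hL₀ : CondL0 c p L₀) (hL : L₀ < L) (n : ℕ) :
    RG0iter G c p d L n (Gp G p) = gradKernel G (effectiveTime c p (L ^ n)) := by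
  have hL1 : 1 < L := hL₀.1.trans hL
  have hL0 : 0 < L := by linarith
  have hp1 : 0 < p + 1 := by linarith
  have hT (m : ℕ) : 0 < effectiveTime c p (L ^ m) :=
    lt_of_lt_of_le (by positivity) (hL₀.effectiveTime_pow_mem_Icc hp hL m).1
  induction n with
  | zero =>
    rw [pow_zero, effectiveTime_one]
    rfl
  | succ n ih =>
    rw [← hG.RG0_gradKernel hL0 (hT (n + 1)) (hT n) (hL₀.sn_pos hp hc hL1 n)
      (sn_add_effectiveTime c p hL0 n), ← ih]
    rfl

theorem rg_iter_Gp_bounded_general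
    (G : ℝ → ℝ → ℝ) (q : ℕ) (d : ℝ) (c : ℝ → ℝ) (p L₀ : ℝ)
    (hd : 0 < d) (hG : CondsG G q d) (hp : -1 < p) (hc : ∀ t, 1 < t → 0 < c t)
    (hL₀ : CondL0 c p L₀) :
    ∃ K : ℝ, ∀ L : ℝ, L₀ < L → ∀ n : ℕ,
      MemBqR q (RG0iter G c p d L n (Gp G p)) ∧ bqNormR q (RG0iter G c p d L n (Gp G p)) ≤ K := by
  have hp1 : 0 < p + 1 := by linarith
  have ha : 0 < 3 / (4 * (p + 1)) := by positivity
  obtain ⟨K, hK⟩ :=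
    exists_bqNormR_gradKernel_le hG.1 hG.2.1 hd (b := 5 / (4 * (p + 1))) ha
  refine ⟨K, fun L hL n => ?_⟩
  have hT := hL₀.effectiveTime_pow_mem_Icc hp hL n
  rw [hG.RG0iter_Gp hp hc hL₀ hL n]
  exact ⟨memBqR_gradKernel hG.1 hG.2.1 (ha.trans_le hT.1), hK _ hT⟩

end RenormalizationGroup

/-- Lemma 2.6: uniform bound `‖R⁰_{Lⁿ}G_p‖ ≤ K̃` for all
`L > L₁` and `n ≥ 1`. -/
theorem rg_iter_Gp_bounded
    (G : ℝ → ℝ → ℝ) (q : ℕ) (d : ℝ) (c : ℝ → ℝ) (p L₀ : ℝ)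
    (hq : 1 < q) (hd : 0 < d) (hG : CondsG G q d) (hc : CondC c p)
    (hL₀ : CondL0 c p L₀) :
    ∃ Kt : ℝ, ∀ L : ℝ, Lone p L₀ < L → ∀ n : ℕ, 1 ≤ n →
      bqNormR q (RG0iter G c p d L n (Gp G p)) ≤ Kt := by
  obtain ⟨K, hK⟩ := rg_iter_Gp_bounded_general G q d c p L₀ hd hG (by linarith [hc.1]) hc.2.1 hL₀
  exact ⟨K, fun L hL n _ => (hK L ((le_max_left _ _).trans_lt hL) n).2⟩
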